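/- There are exactly 14 nontrivial linear identities of length 6 up to the identification ⟨s,t,f⟩ ∼ ⟨t,s,f⁻¹⟩, and for each such identity I there exists a finite magma that satisfies I but does not satisfy any of the other 13 nontrivial linear identities of length 6. Consequently, the 14 varieties of groupoids defined by a single nontrivial linear identity of length 6 are in general position with respect to inclusion: none of them is contained in the union of the remaining 13. -/

import Mathlib

/-!
A bracketing with three leaves is `(xy)z` or `x(yz)`, so a linear identity of length `6` is a pair
of Booleans together with a permutation of `Fin 3` (`codeEquiv`). Of the `24` such triples `2` are
trivial, and counting the remaining `22` up to interchange of the sides gives `14`.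

For the independence, let `W` be any set of words, a word being a three-leaf bracketing whose leaves
carry the generators `x₀, x₁, x₂` in some order `σ`. On the finite set consisting of the three
generators, the nine formal products of two generators, an element `u` and a zero, there is a magma
in which the words of `W` evaluate to `u` and all other threefold products vanish. Such a magma
satisfies `⟨s, t, g⟩` exactly when the order `σ` for `s` belongs to `W` iff the order `σ * g` for
`t` does (`satT_iff`). For an identity `⟨s, t, f⟩` with `s ≠ t`, take `W` to consist of the word `s`
in the order `1` and the word `t` in the order `f`. For `s = t`, take the words `s` in the orders
`1, f, f⁻¹`, which form the subgroup generated by `f`, together with the other bracketing in the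
order `1`. In both cases the only identities compatible with `W` are the trivial ones and
`⟨s, t, f⟩` itself, possibly with sides interchanged (`compatible_iff`).
-/

/-- Bracketings: full binary trees in which every internal node has two children. -/
inductive Brack : Type
  | leaf : Brack
  | node : Brack → Brack → Brack

/-- Number of leaves of a bracketing. -/
def Brack.leaves : Brack → ℕ
  | .leaf => 1
  | .node l r => l.leaves + r.leaves

/-- The `s`-product in a magma `G`: evaluate the bracketing `s`, labelling its leaves
from left to right by `a k, a (k+1), …`. -/
def Brack.eval {G : Type*} [Mul G] : Brack → (ℕ → G) → ℕ → G
  | .leaf, a, k => a k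
  | .node l r, a, k => l.eval a k * r.eval a (k + l.leaves)

/-- Extend a permutation of `{0, …, n−1}` to `ℕ` (identity elsewhere). -/
def permNat {n : ℕ} (f : Equiv.Perm (Fin n)) (i : ℕ) : ℕ :=
  if h : i < n then (f ⟨i, h⟩ : ℕ) else i

/-- A magma `G` satisfies the linear identity `⟨s, t, f⟩` if for all `a₁, …, aₙ ∈ G`
the `s`-product of `(a₁, …, aₙ)` equals the `t`-product of `(a_{f(1)}, …, a_{f(n)})`. -/
def Satisfies (G : Type*) [Mul G] {n : ℕ} (s t : Brack) (f : Equiv.Perm (Fin n)) : Prop :=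
  ∀ a : ℕ → G, s.eval a 0 = t.eval (fun i => a (permNat f i)) 0

/-- A magma `G` is `m`AC-nice if any two products of the same `m` elements coincide:
for every `a`, all bracketings `s, t` with `m` leaves and all permutations `f, g`,
the `s`-product of `(a_{f(1)}, …, a_{f(m)})` equals the `t`-product of
`(a_{g(1)}, …, a_{g(m)})`. -/
def ACnice (G : Type*) [Mul G] (m : ℕ) : Prop :=
  ∀ (a : ℕ → G) (s t : Brack), s.leaves = m → t.leaves = m →
    ∀ f g : Equiv.Perm (Fin m),
      s.eval (fun i => a (permNat f i)) 0 = t.eval (fun i => a (permNat g i)) 0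

/-- Triples encoding linear identities of length `6`. -/
abbrev Trip3 := Brack × Brack × Equiv.Perm (Fin 3)

/-- A nontrivial linear identity of length `6`. -/
def good (x : Trip3) : Prop :=
  x.1.leaves = 3 ∧ x.2.1.leaves = 3 ∧ ¬(x.1 = x.2.1 ∧ x.2.2 = 1)

/-- Identification of `(s, t, f)` with `(t, s, f⁻¹)`. -/
def relRaw (x y : Trip3) : Prop :=
  x = y ∨ (x.1 = y.2.1 ∧ x.2.1 = y.1 ∧ x.2.2 = y.2.2⁻¹)

/-- A magma satisfies the identity encoded by a triple. -/
def SatT (G : Type*) [Mul G] (x : Trip3) : Prop :=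
  Satisfies G x.1 x.2.1 x.2.2

/-- The two bracketings with three leaves: `false` is `(xy)z` and `true` is `x(yz)`. -/
def brack3 : Bool → Brack
  | false => .node (.node .leaf .leaf) .leaf
  | true => .node .leaf (.node .leaf .leaf)

theorem brack3_leaves (b : Bool) : (brack3 b).leaves = 3 := by
  cases b <;> rfl

theorem brack3_injective : Function.Injective brack3 := by
  intro b c h
  cases b <;> cases c <;> simp_all [brack3]

theorem Brack.leaves_pos (s : Brack) : 0 < s.leaves := by
  induction s with
  | leaf => exact Nat.one_pos
  | node l r hl hr => simp only [Brack.leaves]; omega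

theorem Brack.eq_leaf {s : Brack} (h : s.leaves = 1) : s = .leaf := by
  cases s with
  | leaf => rfl
  | node l r =>
    have := l.leaves_pos
    have := r.leaves_pos
    simp only [Brack.leaves] at h
    omega

theorem Brack.eq_node_leaf_leaf {s : Brack} (h : s.leaves = 2) : s = .node .leaf .leaf := by
  cases s with
  | leaf => simp [Brack.leaves] at h
  | node l r =>
    have := l.leaves_pos
    have := r.leaves_pos
    simp only [Brack.leaves] at h
    rw [Brack.eq_leaf (s := l) (by omega), Brack.eq_leaf (s := r) (by omega)]

theorem Brack.exists_brack3 {s : Brack} (h : s.leaves = 3) : ∃ b, brack3 b = s := by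
  cases s with
  | leaf => simp [Brack.leaves] at h
  | node l r =>
    have := l.leaves_pos
    have := r.leaves_pos
    simp only [Brack.leaves] at h
    obtain hl | hl : l.leaves = 1 ∨ l.leaves = 2 := by omega
    · exact ⟨true, by
        rw [Brack.eq_leaf hl, Brack.eq_node_leaf_leaf (s := r) (by omega)]; rfl⟩
    · exact ⟨false, by
        rw [Brack.eq_node_leaf_leaf hl, Brack.eq_leaf (s := r) (by omega)]; rfl⟩

/-- A linear identity of length `6`, with the two bracketings encoded by Booleans. -/
abbrev Code := Bool × Bool × Equiv.Perm (Fin 3)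

/-- The encoded identity is nontrivial. -/
abbrev Code.Nontriv (w : Code) : Prop := ¬(w.1 = w.2.1 ∧ w.2.2 = 1)

/-- The encoded identities agree up to interchange of sides. -/
abbrev Code.Rel (v w : Code) : Prop :=
  v = w ∨ (v.1 = w.2.1 ∧ v.2.1 = w.1 ∧ v.2.2 = w.2.2⁻¹)

def Code.toTrip (w : Code) : Trip3 := (brack3 w.1, brack3 w.2.1, w.2.2)

theorem Code.toTrip_injective : Function.Injective Code.toTrip := by
  rintro ⟨b, c, f⟩ ⟨b', c', f'⟩ h
  simp only [Code.toTrip, Prod.mk.injEq] at h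
  rw [brack3_injective h.1, brack3_injective h.2.1, h.2.2]

theorem Code.good_toTrip (w : Code) : good w.toTrip ↔ w.Nontriv := by
  simp [good, Code.toTrip, brack3_leaves, brack3_injective.eq_iff]

theorem Code.relRaw_toTrip (v w : Code) : relRaw v.toTrip w.toTrip ↔ v.Rel w := by
  unfold relRaw
  rw [Code.toTrip_injective.eq_iff]
  simp [Code.toTrip, brack3_injective.eq_iff]

/-- The nontrivial linear identities of length `6` correspond to the nontrivial codes. -/
noncomputable def codeEquiv : {w : Code // w.Nontriv} ≃ {z : Trip3 // good z} :=
  Equiv.ofBijective (fun w => ⟨w.1.toTrip, w.1.good_toTrip.2 w.2⟩) <| by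
    constructor
    · intro v w h
      exact Subtype.ext (Code.toTrip_injective (congrArg Subtype.val h))
    · rintro ⟨⟨s, t, f⟩, h⟩
      obtain ⟨b, rfl⟩ := Brack.exists_brack3 h.1
      obtain ⟨c, rfl⟩ := Brack.exists_brack3 h.2.1
      exact ⟨⟨(b, c, f), (Code.good_toTrip (b, c, f)).1 h⟩, rfl⟩

theorem codeEquiv_val (w : {w : Code // w.Nontriv}) : (codeEquiv w).1 = w.1.toTrip := rfl

/-- Interchange of sides, as an equivalence relation on the nontrivial codes. -/
def codeSetoid : Setoid {w : Code // w.Nontriv} where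
  r v w := v.1.Rel w.1
  iseqv :=
    { refl := fun _ => Or.inl rfl
      symm := by
        rintro ⟨v, _⟩ ⟨w, _⟩ (h | ⟨h₁, h₂, h₃⟩)
        · exact Or.inl h.symm
        · exact Or.inr ⟨h₂.symm, h₁.symm, by rw [h₃, inv_inv]⟩
      trans := by
        rintro ⟨⟨a, b, f⟩, _⟩ ⟨⟨a', b', f'⟩, _⟩ ⟨⟨a'', b'', f''⟩, _⟩ h h'
        simp only [Code.Rel, Prod.mk.injEq] at h h' ⊢
        rcases h with ⟨rfl, rfl, rfl⟩ | ⟨rfl, rfl, rfl⟩ <;>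
          rcases h' with ⟨rfl, rfl, rfl⟩ | ⟨rfl, rfl, rfl⟩ <;> simp }

instance : DecidableRel codeSetoid.r :=
  fun v w => inferInstanceAs (Decidable (v.1.Rel w.1))

theorem card_quot_code : Nat.card (Quotient codeSetoid) = 14 := by
  rw [Nat.card_eq_fintype_card]
  decide +kernel

theorem card_quot :
    Nat.card (Quot (fun x y : {z : Trip3 // good z} => relRaw x.1 y.1)) = 14 := by
  rw [← card_quot_code]
  refine (Nat.card_congr (Quot.congr codeEquiv fun v w => ?_)).symm
  exact (Code.relRaw_toTrip v.1 w.1).symm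

/-- The carrier of the separating magmas: the generators, the formal products of two generators,
the common value `top` of the selected words, and a zero element. -/
inductive Elt : Type
  | gen : Fin 3 → Elt
  | pair : Fin 3 → Fin 3 → Elt
  | top : Elt
  | zero : Elt

instance : Finite Elt := by
  let g : Fin 3 ⊕ (Fin 3 × Fin 3) ⊕ Bool → Elt := fun x => match x with
    | .inl i => .gen i
    | .inr (.inl p) => .pair p.1 p.2
    | .inr (.inr true) => .top
    | .inr (.inr false) => .zero
  refine Finite.of_surjective g fun x => ?_
  cases x with
  | gen i => exact ⟨.inl i, rfl⟩
  | pair i j => exact ⟨.inr (.inl (i, j)), rfl⟩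
  | top => exact ⟨.inr (.inr true), rfl⟩
  | zero => exact ⟨.inr (.inr false), rfl⟩

open Classical in
/-- The product on `Elt` determined by a set `W` of words, where `W b σ` selects the word with
bracketing `brack3 b` and leaves `σ 0, σ 1, σ 2`. -/
noncomputable def wordMul (W : Bool → Equiv.Perm (Fin 3) → Prop) : Elt → Elt → Elt
  | .gen i, .gen j => .pair i j
  | .pair i j, .gen k => if ∃ σ, W false σ ∧ σ 0 = i ∧ σ 1 = j ∧ σ 2 = k then .top else .zero
  | .gen i, .pair j k => if ∃ σ, W true σ ∧ σ 0 = i ∧ σ 1 = j ∧ σ 2 = k then .top else .zero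
  | _, _ => .zero

open Classical in
/-- A threefold product is `top` if its factors are generators forming a selected word, and
vanishes otherwise. -/
theorem eval_brack3 (W : Bool → Equiv.Perm (Fin 3) → Prop) (b : Bool) (a : ℕ → Elt) :
    @Brack.eval Elt ⟨wordMul W⟩ (brack3 b) a 0 =
      if ∃ σ, W b σ ∧ ∀ i : Fin 3, a i = .gen (σ i) then .top else .zero := by
  have key : ∀ x y z : Elt,
      (bif b then wordMul W x (wordMul W y z) else wordMul W (wordMul W x y) z) =
      if ∃ σ, W b σ ∧ x = .gen (σ 0) ∧ y = .gen (σ 1) ∧ z = .gen (σ 2)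
        then .top else .zero := by
    intro x y z
    cases b
    · cases x <;> cases y <;> cases z <;> simp [wordMul, eq_comm] <;> split_ifs <;> rfl
    · cases x <;> cases y <;> cases z <;> simp [wordMul, eq_comm] <;> split_ifs <;> rfl
  have h := key (a 0) (a 1) (a 2)
  cases b
  · exact Eq.trans h (by simp [Fin.forall_fin_succ])
  · exact Eq.trans h (by simp [Fin.forall_fin_succ])

theorem permNat_val (g : Equiv.Perm (Fin 3)) (i : Fin 3) : permNat g i = g i := by
  simp [permNat]

theorem satT_iff (W : Bool → Equiv.Perm (Fin 3) → Prop) (w : Code) :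
    @SatT Elt ⟨wordMul W⟩ w.toTrip ↔ ∀ σ, W w.1 σ ↔ W w.2.1 (σ * w.2.2) := by
  classical
  obtain ⟨b, c, g⟩ := w
  -- Both sides of the identity take values in `{top, zero}`, so equality is an equivalence.
  have hsat : @SatT Elt ⟨wordMul W⟩ (Code.toTrip (b, c, g)) ↔ ∀ a : ℕ → Elt,
      (∃ σ, W b σ ∧ ∀ i : Fin 3, a i = .gen (σ i)) ↔
        ∃ σ, W c σ ∧ ∀ i : Fin 3, a (g i) = .gen (σ i) := by
    unfold SatT Satisfies
    refine forall_congr' fun a => ?_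
    simp only [Code.toTrip, eval_brack3, permNat_val]
    split_ifs with h₁ h₂ h₂ <;> simp [-not_exists, h₁, h₂]
  rw [hsat]
  constructor
  · intro h σ
    let a : ℕ → Elt := fun i => if hi : i < 3 then .gen (σ ⟨i, hi⟩) else .zero
    have ha : ∀ i : Fin 3, a i = .gen (σ i) := fun i => by simp [a]
    have h₁ := h a
    simp only [ha, Elt.gen.injEq] at h₁
    constructor
    · intro hσ
      obtain ⟨τ, hτ, e⟩ := h₁.1 ⟨σ, hσ, fun _ => rfl⟩
      rwa [show σ * g = τ from Equiv.ext e]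
    · intro hσ
      obtain ⟨τ, hτ, e⟩ := h₁.2 ⟨σ * g, hσ, fun _ => rfl⟩
      rwa [show σ = τ from Equiv.ext e]
  · intro h a
    constructor
    · rintro ⟨σ, hσ, e⟩
      exact ⟨σ * g, (h σ).1 hσ, fun i => e (g i)⟩
    · rintro ⟨τ, hτ, e⟩
      refine ⟨τ * g⁻¹, (h _).2 (by simpa using hτ), fun i => ?_⟩
      simpa using e (g⁻¹ i)

/-- The words selected for the identity `w`. If both sides have the same bracketing, these are its
words in the orders `1, f, f⁻¹`, and the other bracketing in the order `1`, which prevents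
identities on the other bracketing from holding vacuously. -/
def Code.Word (w : Code) (b : Bool) (σ : Equiv.Perm (Fin 3)) : Prop :=
  if w.1 = w.2.1 then
    σ = 1 ∨ (b = w.1 ∧ (σ = w.2.2 ∨ σ = w.2.2⁻¹))
  else
    σ = if b = w.1 then 1 else w.2.2

instance (w : Code) (b : Bool) (σ : Equiv.Perm (Fin 3)) : Decidable (w.Word b σ) := by
  unfold Code.Word
  infer_instance

/-- The identities compatible with the words selected for a nontrivial identity `v` are the trivial
ones and those that agree with `v` up to interchange of sides. -/
theorem compatible_iff : ∀ v w : Code, v.Nontriv →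
    ((∀ σ, v.Word w.1 σ ↔ v.Word w.2.1 (σ * w.2.2)) ↔ ¬w.Nontriv ∨ v.Rel w) := by
  decide +kernel

/-- There are exactly `14` nontrivial linear identities of length `6` up to
interchanging the two sides, and for each of them there is a finite magma satisfying it
but none of the other `13`; hence the corresponding `14` varieties are in general
position with respect to inclusion. -/
theorem stmt19 :
    Nat.card (Quot (fun x y : {z : Trip3 // good z} => relRaw x.1 y.1)) = 14 ∧
    ∀ I : {z : Trip3 // good z}, ∃ (G : Type) (inst : Mul G), Finite G ∧
      @SatT G inst I.1 ∧
      ∀ J : {z : Trip3 // good z}, ¬relRaw I.1 J.1 → ¬@SatT G inst J.1 := by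
  refine ⟨card_quot, fun I => ?_⟩
  obtain ⟨v, rfl⟩ := codeEquiv.surjective I
  refine ⟨Elt, ⟨wordMul v.1.Word⟩, inferInstance, ?_, fun J hJ hsat => ?_⟩
  · rw [codeEquiv_val, satT_iff, compatible_iff _ _ v.2]
    exact Or.inr (Or.inl rfl)
  · obtain ⟨w, rfl⟩ := codeEquiv.surjective J
    rw [codeEquiv_val, satT_iff, compatible_iff _ _ v.2] at hsat
    rw [codeEquiv_val, codeEquiv_val, Code.relRaw_toTrip] at hJ
    exact hsat.elim (fun h => h w.2) hJ
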